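/- arXiv:1808.10768 — 2 statements merged into one kernel-verified Lean document; each statement's English description precedes it below -/
import Mathlib

section
/- Let n ≥ 1 be an integer and I_n = ∫_T^{T+H} V_y(t)ⁿ dt. Then for any real T and any H > 1, one has I_n = H·δ_n + O((n·y/2)^{n/2}) with an absolute implied constant, where δ_n = 0 if n is odd, and δ_n = ((2k)!/k!)·G^{(k)}(0)/2^{2k} if n = 2k is even. -/
open MeasureTheory Real Complex Filter

/-- The set of primes `p ≤ y`. -/
noncomputable def primesLe (y : ℝ) : Finset ℕ :=
  (Finset.range (⌊y⌋₊ + 1)).filter Nat.Prime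

/-- `V_y(t) = ∑_{p ≤ y} sin(t log p)/√p`. -/
noncomputable def Vy (y t : ℝ) : ℝ :=
  ∑ p ∈ primesLe y, Real.sin (t * Real.log p) / Real.sqrt p

/-- `σ = σ(y) = ∑_{p ≤ y} 1/p`. -/
noncomputable def sigmay (y : ℝ) : ℝ := ∑ p ∈ primesLe y, (1 : ℝ) / p

/-- `J0twoISqrt w = J₀(2i√w) = ∑_{n≥0} wⁿ/(n!)²`, where `J₀` is the Bessel function of
the first kind of order 0. -/
noncomputable def J0twoISqrt (w : ℂ) : ℂ := ∑' n : ℕ, w ^ n / ((n.factorial : ℂ)) ^ 2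

/-- `G(z) = ∏_{p ≤ y} J₀(2i√(z/p))`. -/
noncomputable def Gfun (y : ℝ) (z : ℂ) : ℂ := ∏ p ∈ primesLe y, J0twoISqrt (z / (p : ℂ))

/-- `δ_n = 0` for odd `n`, and `δ_{2k} = ((2k)!/k!)·G^{(k)}(0)/2^{2k}`. -/
noncomputable def deltan (y : ℝ) (n : ℕ) : ℝ :=
  if Even n then
    ((n.factorial : ℝ) / ((n / 2).factorial : ℝ)) * (iteratedDeriv (n / 2) (Gfun y) 0).re / 2 ^ n
  else 0

/-!
Write `V_y(t) = (A(t) - A(-t)) / (2i)` with `A(t) = ∑_{p ≤ y} p ^ (-1/2 + it)` and expand `V_y ^ n`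
binomially. By unique factorization `A ^ j` is a Dirichlet polynomial whose coefficient at `m`
counts the orderings of the prime factors of `m`. In the mean value of `A(t) ^ j * A(-t) ^ k` a
common frequency occurs only if `j = k`, and these diagonal terms add up to the power series
coefficients of `∏_p J₀(2i√(z/p))`. The other terms are controlled by the Schur test: coefficients
of `ℓ²`-norm at most `√(j! π(y) ^ j)` lose only a factor `log (y ^ n)`, which Chebyshev's bound
for `π(y)` absorbs as soon as `n ≥ 2`, while Stirling's formula turns `√n!` into
`(n / 2) ^ (n / 2)`. For `n = 1` the integral is bounded term by term.
-/

section HilbertType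

/-- The Schur test. -/
theorem sum_sum_mul_mul_le_of_row_sum_le_of_col_sum_le {ι κ : Type*} {P : Finset ι} {Q : Finset κ}
    {w : ι → κ → ℝ} {R : ℝ} (hw : ∀ i j, 0 ≤ w i j) (hR : 0 ≤ R)
    (hrow : ∀ i ∈ P, ∑ j ∈ Q, w i j ≤ R) (hcol : ∀ j ∈ Q, ∑ i ∈ P, w i j ≤ R)
    (x : ι → ℝ) (z : κ → ℝ) :
    ∑ i ∈ P, ∑ j ∈ Q, x i * z j * w i j ≤ R * (√(∑ i ∈ P, x i ^ 2) * √(∑ j ∈ Q, z j ^ 2)) := by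
  have hsq (c : ℝ) (i : ι) (j : κ) : (c * √(w i j)) ^ 2 = c ^ 2 * w i j := by
    rw [mul_pow, Real.sq_sqrt (hw i j)]
  have hx : ∑ q ∈ P ×ˢ Q, (x q.1 * √(w q.1 q.2)) ^ 2 ≤ R * ∑ i ∈ P, x i ^ 2 := by
    simp only [hsq]
    rw [Finset.sum_product, Finset.mul_sum]
    refine Finset.sum_le_sum fun i hi ↦ ?_
    dsimp only
    rw [← Finset.mul_sum, mul_comm]
    exact mul_le_mul_of_nonneg_right (hrow i hi) (sq_nonneg _)
  have hz : ∑ q ∈ P ×ˢ Q, (z q.2 * √(w q.1 q.2)) ^ 2 ≤ R * ∑ j ∈ Q, z j ^ 2 := by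
    simp only [hsq]
    rw [Finset.sum_product_right, Finset.mul_sum]
    refine Finset.sum_le_sum fun j hj ↦ ?_
    dsimp only
    rw [← Finset.mul_sum, mul_comm]
    exact mul_le_mul_of_nonneg_right (hcol j hj) (sq_nonneg _)
  calc ∑ i ∈ P, ∑ j ∈ Q, x i * z j * w i j
      = ∑ q ∈ P ×ˢ Q, (x q.1 * √(w q.1 q.2)) * (z q.2 * √(w q.1 q.2)) := by
        rw [Finset.sum_product]
        refine Finset.sum_congr rfl fun i _ ↦ Finset.sum_congr rfl fun j _ ↦ ?_
        rw [mul_mul_mul_comm, Real.mul_self_sqrt (hw i j)]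
    _ ≤ √(R * ∑ i ∈ P, x i ^ 2) * √(R * ∑ j ∈ Q, z j ^ 2) :=
        (Real.sum_mul_le_sqrt_mul_sqrt _ _ _).trans <|
          mul_le_mul (Real.sqrt_le_sqrt hx) (Real.sqrt_le_sqrt hz) (Real.sqrt_nonneg _)
            (Real.sqrt_nonneg _)
    _ = R * (√(∑ i ∈ P, x i ^ 2) * √(∑ j ∈ Q, z j ^ 2)) := by
        rw [Real.sqrt_mul hR, Real.sqrt_mul hR, mul_mul_mul_comm, Real.mul_self_sqrt hR]

theorem sum_range_inv_abs_sub {m N : ℕ} (hm : m ≤ N) :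
    ∑ n ∈ Finset.range (N + 1), |(m : ℝ) - n|⁻¹ = harmonic m + harmonic (N - m) := by
  have hleft : ∑ n ∈ Finset.range m, |(m : ℝ) - n|⁻¹ = harmonic m := by
    rw [← Finset.sum_range_reflect, harmonic, Rat.cast_sum]
    refine Finset.sum_congr rfl fun i hi ↦ ?_
    have hi := Finset.mem_range.mp hi
    rw [Nat.sub_sub, Nat.cast_sub (by lia), sub_sub_cancel, Nat.abs_cast]
    push_cast
    rw [add_comm]
  have hright : ∑ i ∈ Finset.range (N - m + 1), |(m : ℝ) - (m + i : ℕ)|⁻¹ = harmonic (N - m) := by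
    rw [Finset.sum_range_succ', harmonic, Rat.cast_sum]
    simp only [Nat.cast_add, sub_add_cancel_left, abs_neg]
    norm_cast
    simp
  rw [← hleft, ← hright, ← Finset.sum_range_add, show m + (N - m + 1) = N + 1 by lia]

theorem sum_inv_abs_sub_le {N m : ℕ} (hm : m ≤ N) {Q : Finset ℕ} (hQ : ∀ n ∈ Q, n ≤ N) :
    ∑ n ∈ Q, |(m : ℝ) - n|⁻¹ ≤ 2 * (1 + Real.log N) := by
  have hharm {k : ℕ} (hk : k ≤ N) : (harmonic k : ℝ) ≤ 1 + Real.log N := by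
    refine le_trans ?_ (harmonic_le_one_add_log N)
    exact_mod_cast Finset.sum_le_sum_of_subset_of_nonneg (Finset.range_mono hk)
      fun _ _ _ ↦ by positivity
  calc ∑ n ∈ Q, |(m : ℝ) - n|⁻¹ ≤ ∑ n ∈ Finset.range (N + 1), |(m : ℝ) - n|⁻¹ :=
        Finset.sum_le_sum_of_subset_of_nonneg (fun n hn ↦ Finset.mem_range_succ_iff.mpr (hQ n hn))
          fun _ _ _ ↦ by positivity
    _ = harmonic m + harmonic (N - m) := sum_range_inv_abs_sub hm
    _ ≤ 2 * (1 + Real.log N) := by linarith [hharm hm, hharm (Nat.sub_le N m)]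

-- The diagonal terms vanish, by the convention `0⁻¹ = 0`.
theorem sum_sum_mul_inv_abs_sub_le {N : ℕ} {P Q : Finset ℕ} (hP : ∀ m ∈ P, m ≤ N)
    (hQ : ∀ n ∈ Q, n ≤ N) (x z : ℕ → ℝ) :
    ∑ m ∈ P, ∑ n ∈ Q, x m * z n * |(m : ℝ) - n|⁻¹ ≤
      2 * (1 + Real.log N) * (√(∑ m ∈ P, x m ^ 2) * √(∑ n ∈ Q, z n ^ 2)) := by
  refine sum_sum_mul_mul_le_of_row_sum_le_of_col_sum_le (fun _ _ ↦ by positivity)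
    (mul_nonneg zero_le_two (add_nonneg zero_le_one (Real.log_natCast_nonneg N)))
    (fun m hm ↦ sum_inv_abs_sub_le (hP m hm) hQ) (fun n hn ↦ ?_) x z
  simp only [abs_sub_comm _ (n : ℝ)]
  exact sum_inv_abs_sub_le (hQ n hn) hP

theorem inv_sqrt_mul_sqrt_mul_abs_log_sub_le {a b : ℝ} (ha : 0 < a) (hb : 0 < b) :
    (√a * √b * |Real.log a - Real.log b|)⁻¹ ≤ |a - b|⁻¹ + (√a * √b)⁻¹ := by
  wlog hab : b ≤ a generalizing a b
  · simpa only [mul_comm √b, abs_sub_comm] using this hb ha (le_of_not_ge hab)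
  rcases hab.eq_or_lt with rfl | hab
  · simp only [sub_self, abs_zero, mul_zero, inv_zero, zero_add]
    positivity
  have hd : 0 < a - b := sub_pos.mpr hab
  have hlog : (a - b) / a ≤ Real.log a - Real.log b := by
    have := Real.one_sub_inv_le_log_of_pos (div_pos ha hb)
    rwa [inv_div, one_sub_div ha.ne', Real.log_div ha.ne' hb.ne'] at this
  rw [abs_of_pos hd, abs_of_pos ((div_pos hd ha).trans_le hlog)]
  calc (√a * √b * (Real.log a - Real.log b))⁻¹ ≤ (√a * √b * ((a - b) / a))⁻¹ := by gcongr
    _ = b / (√a * √b) * (a - b)⁻¹ + (√a * √b)⁻¹ := by field_simp; ring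
    _ ≤ 1 * (a - b)⁻¹ + (√a * √b)⁻¹ := by
        gcongr
        rw [div_le_one (by positivity)]
        calc b = √b * √b := (Real.mul_self_sqrt hb.le).symm
          _ ≤ √a * √b := by gcongr
    _ = (a - b)⁻¹ + (√a * √b)⁻¹ := by rw [one_mul]

end HilbertType

section MeanValue

/-- The completely multiplicative function `m ↦ m ^ (-1/2 + it)`. -/
noncomputable def halfTwist (t : ℝ) : ℕ →* ℂ where
  toFun m := (m : ℂ) ^ (-(1 / 2) + t * I : ℂ)
  map_one' := by rw [Nat.cast_one, one_cpow]
  map_mul' m n := by rw [Nat.cast_mul, natCast_mul_natCast_cpow]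

theorem halfTwist_apply {m : ℕ} (hm : m ≠ 0) (t : ℝ) :
    halfTwist t m = (√m : ℂ)⁻¹ * Complex.exp (t * Real.log m * I) := by
  have hm' : (m : ℂ) ≠ 0 := Nat.cast_ne_zero.mpr hm
  change (m : ℂ) ^ (-(1 / 2) + t * I : ℂ) = _
  rw [cpow_add _ _ hm', cpow_neg, cpow_def_of_ne_zero hm' (t * I), Real.sqrt_eq_rpow,
    ofReal_cpow m.cast_nonneg, ← natCast_log]
  push_cast
  ring_nf

theorem norm_halfTwist {m : ℕ} (hm : m ≠ 0) (t : ℝ) : ‖halfTwist t m‖ = (√m)⁻¹ := by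
  rw [halfTwist_apply hm, norm_mul, ← ofReal_mul, norm_exp_ofReal_mul_I, mul_one, norm_inv,
    norm_real, Real.norm_of_nonneg (Real.sqrt_nonneg _)]

theorem continuous_halfTwist {m : ℕ} (hm : m ≠ 0) : Continuous fun t ↦ halfTwist t m := by
  simp only [halfTwist_apply hm]
  fun_prop

theorem halfTwist_mul_halfTwist_neg {m n : ℕ} (hm : m ≠ 0) (hn : n ≠ 0) (t : ℝ) :
    halfTwist t m * halfTwist (-t) n =
      ((√m * √n)⁻¹ : ℝ) * Complex.exp ((Real.log m - Real.log n : ℝ) * I * t) := by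
  rw [halfTwist_apply hm, halfTwist_apply hn, mul_mul_mul_comm, ← Complex.exp_add]
  push_cast
  rw [mul_inv]
  ring_nf

theorem integral_halfTwist_mul_halfTwist_neg_self {m : ℕ} (hm : m ≠ 0) (a b : ℝ) :
    ∫ t in a..b, halfTwist t m * halfTwist (-t) m = (b - a) / m := by
  simp only [halfTwist_mul_halfTwist_neg hm hm, sub_self, ofReal_zero, zero_mul, Complex.exp_zero,
    mul_one, intervalIntegral.integral_const, Real.mul_self_sqrt m.cast_nonneg, real_smul]
  push_cast
  rw [div_eq_mul_inv]

theorem norm_integral_halfTwist_mul_halfTwist_neg_le {m n : ℕ} (hm : m ≠ 0) (hn : n ≠ 0)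
    (hmn : m ≠ n) (a b : ℝ) :
    ‖∫ t in a..b, halfTwist t m * halfTwist (-t) n‖ ≤
      2 * (√m * √n * |Real.log m - Real.log n|)⁻¹ := by
  have hlog : Real.log m - Real.log n ≠ 0 := by
    rw [sub_ne_zero]
    exact fun h ↦ hmn <| Nat.cast_injective <|
      Real.log_injOn_pos (Set.mem_Ioi.mpr (Nat.cast_pos.mpr hm.bot_lt))
        (Set.mem_Ioi.mpr (Nat.cast_pos.mpr hn.bot_lt)) h
  have hexp (t : ℝ) : ‖Complex.exp ((Real.log m - Real.log n : ℝ) * I * t)‖ = 1 := by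
    rw [mul_right_comm, ← ofReal_mul, norm_exp_ofReal_mul_I]
  simp only [halfTwist_mul_halfTwist_neg hm hn]
  rw [intervalIntegral.integral_const_mul,
    integral_exp_mul_complex (mul_ne_zero (ofReal_ne_zero.mpr hlog) I_ne_zero), norm_mul, norm_div,
    norm_mul, norm_I, mul_one, norm_real, norm_real, Real.norm_eq_abs, Real.norm_eq_abs,
    abs_of_nonneg (by positivity), mul_inv (√m * √n), mul_left_comm, ← div_eq_mul_inv]
  gcongr
  exact (norm_sub_le _ _).trans_eq (by rw [hexp, hexp, one_add_one_eq_two])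

/-- The Dirichlet polynomial `∑ u(m) m ^ (-1/2 + it)` with frequencies `m ∈ P`. -/
noncomputable def dirichletPoly (P : Finset ℕ) (u : ℕ → ℂ) (t : ℝ) : ℂ :=
  ∑ m ∈ P, u m * halfTwist t m

theorem continuous_dirichletPoly {P : Finset ℕ} (hP : ∀ m ∈ P, m ≠ 0) (u : ℕ → ℂ) :
    Continuous (dirichletPoly P u) :=
  continuous_finsetSum _ fun m hm ↦ continuous_const.mul (continuous_halfTwist (hP m hm))

theorem integral_dirichletPoly_mul_dirichletPoly_neg {P Q : Finset ℕ} (hP : ∀ m ∈ P, m ≠ 0)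
    (hQ : ∀ n ∈ Q, n ≠ 0) (u v : ℕ → ℂ) (a b : ℝ) :
    ∫ t in a..b, dirichletPoly P u t * dirichletPoly Q v (-t) =
      ∑ m ∈ P, ∑ n ∈ Q, u m * v n * ∫ t in a..b, halfTwist t m * halfTwist (-t) n := by
  have hcont (m) (hm : m ∈ P) (n) (hn : n ∈ Q) :
      IntervalIntegrable (fun t ↦ u m * v n * (halfTwist t m * halfTwist (-t) n)) volume a b :=
    (continuous_const.mul ((continuous_halfTwist (hP m hm)).mul
      ((continuous_halfTwist (hQ n hn)).comp continuous_neg))).intervalIntegrable _ _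
  simp only [dirichletPoly, Finset.sum_mul_sum, mul_mul_mul_comm]
  rw [intervalIntegral.integral_finsetSum fun m hm ↦
    by simpa only [Finset.sum_fn] using IntervalIntegrable.sum Q (hcont m hm)]
  refine Finset.sum_congr rfl fun m hm ↦ ?_
  rw [intervalIntegral.integral_finsetSum (hcont m hm)]
  exact Finset.sum_congr rfl fun n _ ↦ intervalIntegral.integral_const_mul ..

/-- Since `1 / (√(mn) |log (m / n)|) ≤ 1 / |m - n| + 1 / √(mn)`, the off-diagonal terms are bounded
by a Hilbert-type form and a product of two `ℓ¹` norms. -/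
theorem norm_integral_dirichletPoly_mul_dirichletPoly_neg_sub_le {N : ℕ} {P Q : Finset ℕ}
    (hP : P ⊆ Finset.Icc 1 N) (hQ : Q ⊆ Finset.Icc 1 N) (u v : ℕ → ℂ) (a b : ℝ) :
    ‖(∫ t in a..b, dirichletPoly P u t * dirichletPoly Q v (-t)) -
        (b - a) * ∑ m ∈ P ∩ Q, u m * v m / m‖ ≤
      4 * (1 + Real.log N) * (√(∑ m ∈ P, ‖u m‖ ^ 2) * √(∑ n ∈ Q, ‖v n‖ ^ 2)) +
        2 * ((∑ m ∈ P, ‖u m‖ * (√m)⁻¹) * ∑ n ∈ Q, ‖v n‖ * (√n)⁻¹) := by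
  have hP0 (m) (hm : m ∈ P) : m ≠ 0 := Nat.one_le_iff_ne_zero.mp (Finset.mem_Icc.mp (hP hm)).1
  have hQ0 (n) (hn : n ∈ Q) : n ≠ 0 := Nat.one_le_iff_ne_zero.mp (Finset.mem_Icc.mp (hQ hn)).1
  have hdiag : (b - a) * ∑ m ∈ P ∩ Q, u m * v m / m =
      ∑ m ∈ P, ∑ n ∈ Q, if m = n then u m * v m * ((b - a) / m) else 0 := by
    simp only [Finset.sum_ite_eq, ← Finset.sum_filter, Finset.filter_mem_eq_inter, Finset.mul_sum]
    exact Finset.sum_congr rfl fun m _ ↦ by ring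
  have hterm (m) (hm : m ∈ P) (n) (hn : n ∈ Q) :
      ‖u m * v n * (∫ t in a..b, halfTwist t m * halfTwist (-t) n) -
          if m = n then u m * v m * ((b - a) / m) else 0‖ ≤
        2 * (‖u m‖ * ‖v n‖ * |(m : ℝ) - n|⁻¹) + 2 * (‖u m‖ * (√m)⁻¹ * (‖v n‖ * (√n)⁻¹)) := by
    split_ifs with hmn
    · subst hmn
      rw [integral_halfTwist_mul_halfTwist_neg_self (hP0 m hm), sub_self, norm_zero]
      positivity
    · rw [sub_zero, norm_mul, norm_mul]
      calc ‖u m‖ * ‖v n‖ * ‖∫ t in a..b, halfTwist t m * halfTwist (-t) n‖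
          ≤ ‖u m‖ * ‖v n‖ * (2 * (|(m : ℝ) - n|⁻¹ + (√m * √n)⁻¹)) := by
            gcongr
            refine (norm_integral_halfTwist_mul_halfTwist_neg_le (hP0 m hm) (hQ0 n hn)
              hmn a b).trans ?_
            gcongr
            exact inv_sqrt_mul_sqrt_mul_abs_log_sub_le (Nat.cast_pos.mpr (hP0 m hm).bot_lt)
              (Nat.cast_pos.mpr (hQ0 n hn).bot_lt)
        _ = _ := by rw [mul_inv]; ring
  have hhilbert := sum_sum_mul_inv_abs_sub_le (fun m hm ↦ (Finset.mem_Icc.mp (hP hm)).2)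
    (fun n hn ↦ (Finset.mem_Icc.mp (hQ hn)).2) (fun m ↦ ‖u m‖) fun n ↦ ‖v n‖
  rw [integral_dirichletPoly_mul_dirichletPoly_neg hP0 hQ0, hdiag, ← Finset.sum_sub_distrib]
  simp only [← Finset.sum_sub_distrib]
  refine (norm_sum_le_of_le _ fun m hm ↦ norm_sum_le_of_le _ fun n hn ↦ hterm m hm n hn).trans ?_
  simp only [Finset.sum_add_distrib, ← Finset.mul_sum, ← Finset.sum_mul]
  linarith

end MeanValue

section PrimeProducts

variable {S : Finset ℕ} {j k m M : ℕ}

/-- The products of `j` not necessarily distinct elements of `S`. -/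
def primeProducts (S : Finset ℕ) (j : ℕ) : Finset ℕ :=
  (S.piAntidiag j).image fun α ↦ ∏ p ∈ S, p ^ α p

/-- The number of ways of writing `m` as an ordered product of primes from `S`, provided that all
prime factors of `m` lie in `S`. -/
def primeOrderings (S : Finset ℕ) (m : ℕ) : ℕ :=
  Nat.multinomial S m.factorization

theorem factorization_prod_pow_eq (hS : ∀ p ∈ S, p.Prime) {α : ℕ → ℕ}
    (hα : ∀ p, α p ≠ 0 → p ∈ S) : ⇑(∏ p ∈ S, p ^ α p).factorization = α := by
  ext q
  rw [Nat.factorization_prod fun p hp ↦ pow_ne_zero _ (hS p hp).ne_zero, Finsupp.finsetSum_apply,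
    Finset.sum_congr rfl fun p hp ↦ by rw [(hS p hp).factorization_pow, Finsupp.single_apply],
    Finset.sum_ite_eq', ite_eq_left_iff]
  exact fun hq ↦ (not_imp_comm.mp (hα q) hq).symm

theorem sum_primeProducts {A : Type*} [AddCommMonoid A] (hS : ∀ p ∈ S, p.Prime) (j : ℕ)
    (F : (ℕ → ℕ) → ℕ → A) :
    ∑ m ∈ primeProducts S j, F m.factorization m =
      ∑ α ∈ S.piAntidiag j, F α (∏ p ∈ S, p ^ α p) := by
  have hfact {α} (hα : α ∈ S.piAntidiag j) : ⇑(∏ p ∈ S, p ^ α p).factorization = α :=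
    factorization_prod_pow_eq hS (Finset.mem_piAntidiag.mp hα).2
  rw [primeProducts, Finset.sum_image fun α hα β hβ h ↦ by
    rw [← hfact hα, ← hfact hβ]
    exact congrArg (fun m : ℕ ↦ ⇑m.factorization) h]
  exact Finset.sum_congr rfl fun α hα ↦ by rw [hfact hα]

theorem sum_map_pow_eq_sum_primeProducts {R : Type*} [CommSemiring R] (hS : ∀ p ∈ S, p.Prime)
    (f : ℕ →* R) (j : ℕ) :
    (∑ p ∈ S, f p) ^ j = ∑ m ∈ primeProducts S j, (primeOrderings S m : R) * f m := by
  simp only [primeOrderings]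
  rw [sum_primeProducts hS j fun α m ↦ (Nat.multinomial S α : R) * f m,
    Finset.sum_pow_eq_sum_piAntidiag]
  simp only [map_prod, map_pow]

theorem sum_factorization_eq_of_mem_primeProducts (hS : ∀ p ∈ S, p.Prime)
    (hm : m ∈ primeProducts S j) : ∑ p ∈ S, m.factorization p = j := by
  obtain ⟨α, hα, rfl⟩ := Finset.mem_image.mp hm
  rw [Finset.mem_piAntidiag] at hα
  rw [factorization_prod_pow_eq hS hα.2, hα.1]

theorem disjoint_primeProducts (hS : ∀ p ∈ S, p.Prime) (hjk : j ≠ k) :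
    Disjoint (primeProducts S j) (primeProducts S k) :=
  Finset.disjoint_left.mpr fun _ hj hk ↦ hjk <|
    (sum_factorization_eq_of_mem_primeProducts hS hj).symm.trans
      (sum_factorization_eq_of_mem_primeProducts hS hk)

theorem primeProducts_subset_Icc (hS : S ⊆ Finset.Icc 1 M) (j : ℕ) :
    primeProducts S j ⊆ Finset.Icc 1 (M ^ j) := by
  intro m hm
  obtain ⟨α, hα, rfl⟩ := Finset.mem_image.mp hm
  have hbd (p) (hp : p ∈ S) := Finset.mem_Icc.mp (hS hp)
  rw [Finset.mem_Icc, ← (Finset.mem_piAntidiag.mp hα).1, ← Finset.prod_pow_eq_pow_sum]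
  exact ⟨Finset.prod_pos fun p hp ↦ Nat.pow_pos (hbd p hp).1,
    Finset.prod_le_prod' fun p hp ↦ Nat.pow_le_pow_left (hbd p hp).2 _⟩

theorem ne_zero_of_mem_primeProducts (hS : ∀ p ∈ S, p.Prime) (hm : m ∈ primeProducts S j) :
    m ≠ 0 := by
  obtain ⟨α, -, rfl⟩ := Finset.mem_image.mp hm
  exact Finset.prod_ne_zero_iff.mpr fun p hp ↦ pow_ne_zero _ (hS p hp).ne_zero

theorem primeOrderings_le_factorial (hS : ∀ p ∈ S, p.Prime) (hm : m ∈ primeProducts S j) :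
    primeOrderings S m ≤ j.factorial := by
  rw [← sum_factorization_eq_of_mem_primeProducts hS hm, ← Nat.multinomial_spec]
  exact Nat.le_mul_of_pos_left _ (Finset.prod_pos fun _ _ ↦ Nat.factorial_pos _)

theorem sum_primeOrderings_sq_le (hS : ∀ p ∈ S, p.Prime) (j : ℕ) :
    ∑ m ∈ primeProducts S j, primeOrderings S m ^ 2 ≤ j.factorial * S.card ^ j := by
  have hsum : ∑ m ∈ primeProducts S j, primeOrderings S m = S.card ^ j := by
    simpa using (sum_map_pow_eq_sum_primeProducts hS (1 : ℕ →* ℕ) j).symm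
  rw [← hsum, Finset.mul_sum]
  refine Finset.sum_le_sum fun m hm ↦ ?_
  rw [sq]
  exact Nat.mul_le_mul_right _ (primeOrderings_le_factorial hS hm)

theorem sum_primeOrderings_mul_inv_sqrt (hS : ∀ p ∈ S, p.Prime) (j : ℕ) :
    ∑ m ∈ primeProducts S j, primeOrderings S m * (√m)⁻¹ = (∑ p ∈ S, (√p)⁻¹) ^ j := by
  have hnorm : ∀ m ≠ 0, normHom.toMonoidHom.comp (halfTwist 0) m = (√m : ℝ)⁻¹ :=
    fun m hm ↦ norm_halfTwist hm 0
  have hpow := sum_map_pow_eq_sum_primeProducts hS (normHom.toMonoidHom.comp (halfTwist 0)) j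
  rw [Finset.sum_congr rfl fun p hp ↦ hnorm p (hS p hp).ne_zero] at hpow
  rw [hpow]
  exact Finset.sum_congr rfl fun m hm ↦ by rw [hnorm m (ne_zero_of_mem_primeProducts hS hm)]

/-- The sum `∑ c(m)² / m` over the products `m` of `k` primes from `S`, where `c(m)` counts the
orderings of the factors of `m`: the mean value of `|∑_{p ∈ S} p ^ (-1/2 + it)| ^ (2k)`. -/
noncomputable def diagonalSum (S : Finset ℕ) (k : ℕ) : ℝ :=
  ∑ m ∈ primeProducts S k, (primeOrderings S m : ℝ) ^ 2 / m

theorem dirichletPoly_one_pow (hS : ∀ p ∈ S, p.Prime) (j : ℕ) (t : ℝ) :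
    dirichletPoly S 1 t ^ j = dirichletPoly (primeProducts S j) (fun m ↦ primeOrderings S m) t := by
  simp only [dirichletPoly, Pi.one_apply, one_mul]
  exact sum_map_pow_eq_sum_primeProducts hS (halfTwist t) j

theorem sqrt_sum_primeOrderings_sq_mul_le (hS : ∀ p ∈ S, p.Prime) (j k : ℕ) :
    √(∑ m ∈ primeProducts S j, ‖(primeOrderings S m : ℂ)‖ ^ 2) *
        √(∑ n ∈ primeProducts S k, ‖(primeOrderings S n : ℂ)‖ ^ 2) ≤
      √((j + k).factorial * S.card ^ (j + k)) := by
  simp only [Complex.norm_natCast]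
  rw [← Real.sqrt_mul (by positivity)]
  refine Real.sqrt_le_sqrt ?_
  norm_cast
  calc (∑ m ∈ primeProducts S j, primeOrderings S m ^ 2) *
          ∑ m ∈ primeProducts S k, primeOrderings S m ^ 2
      ≤ (j.factorial * S.card ^ j) * (k.factorial * S.card ^ k) :=
        Nat.mul_le_mul (sum_primeOrderings_sq_le hS j) (sum_primeOrderings_sq_le hS k)
    _ = (j.factorial * k.factorial) * S.card ^ (j + k) := by rw [pow_add, mul_mul_mul_comm]
    _ ≤ (j + k).factorial * S.card ^ (j + k) := by
        gcongr
        exact Nat.le_of_dvd (Nat.factorial_pos _)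
          (Nat.factorial_mul_factorial_dvd_factorial_add j k)

theorem sum_primeProducts_inter (hS : ∀ p ∈ S, p.Prime) (j k : ℕ) :
    ∑ m ∈ primeProducts S j ∩ primeProducts S k, (primeOrderings S m * primeOrderings S m / m : ℂ) =
      if j = k then (diagonalSum S k : ℂ) else 0 := by
  split_ifs with hjk
  · rw [hjk, Finset.inter_self, diagonalSum]
    push_cast
    simp only [sq]
  · rw [Finset.disjoint_iff_inter_eq_empty.mp (disjoint_primeProducts hS hjk), Finset.sum_empty]

theorem norm_integral_dirichletPoly_one_pow_mul_sub_le (hS : ∀ p ∈ S, p.Prime) (hM : 1 ≤ M)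
    (hSM : ∀ p ∈ S, p ≤ M) (j k : ℕ) (a b : ℝ) :
    ‖(∫ t in a..b, dirichletPoly S 1 t ^ j * dirichletPoly S 1 (-t) ^ k) -
        (b - a) * if j = k then (diagonalSum S k : ℂ) else 0‖ ≤
      4 * (1 + (j + k : ℕ) * Real.log M) * √((j + k).factorial * S.card ^ (j + k)) +
        2 * (∑ p ∈ S, (√p)⁻¹) ^ (j + k) := by
  have hIcc {i : ℕ} (hi : i ≤ j + k) : primeProducts S i ⊆ Finset.Icc 1 (M ^ (j + k)) :=
    (primeProducts_subset_Icc (fun p hp ↦ Finset.mem_Icc.mpr ⟨(hS p hp).one_le, hSM p hp⟩) i).trans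
      (Finset.Icc_subset_Icc_right (Nat.pow_le_pow_right hM hi))
  have hmean := norm_integral_dirichletPoly_mul_dirichletPoly_neg_sub_le
    (hIcc (Nat.le_add_right j k)) (hIcc (Nat.le_add_left k j))
    (fun m ↦ (primeOrderings S m : ℂ)) (fun m ↦ primeOrderings S m) a b
  rw [sum_primeProducts_inter hS, Nat.cast_pow, Real.log_pow] at hmean
  simp only [← dirichletPoly_one_pow hS] at hmean
  refine hmean.trans (add_le_add ?_ ?_)
  · have := Real.log_natCast_nonneg M
    exact mul_le_mul_of_nonneg_left (sqrt_sum_primeOrderings_sq_mul_le hS j k) (by positivity)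
  · simp only [Complex.norm_natCast, sum_primeOrderings_mul_inv_sqrt hS, ← pow_add]
    exact le_rfl

end PrimeProducts

section GeneratingFunction

theorem iteratedDeriv_mul_div_factorial {𝕜 : Type*} [NontriviallyNormedField 𝕜] [CharZero 𝕜]
    {n : ℕ} {f g : 𝕜 → 𝕜} {x : 𝕜} (hf : ContDiffAt 𝕜 n f x) (hg : ContDiffAt 𝕜 n g x) :
    iteratedDeriv n (f * g) x / n.factorial = ∑ q ∈ Finset.HasAntidiagonal.antidiagonal n,
      iteratedDeriv q.1 f x / q.1.factorial * (iteratedDeriv q.2 g x / q.2.factorial) := by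
  rw [iteratedDeriv_mul hf hg, Finset.Nat.sum_antidiagonal_eq_sum_range_succ_mk, Finset.sum_div]
  refine Finset.sum_congr rfl fun i hi ↦ ?_
  rw [Nat.cast_choose _ (Finset.mem_range_succ_iff.mp hi)]
  field_simp [Nat.factorial_ne_zero]

theorem iteratedDeriv_prod_div_factorial {𝕜 ι : Type*} [NontriviallyNormedField 𝕜] [CharZero 𝕜]
    [DecidableEq ι] {s : Finset ι} {f : ι → 𝕜 → 𝕜} {x : 𝕜} {n : ℕ}
    (hf : ∀ i ∈ s, ContDiffAt 𝕜 n (f i) x) :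
    iteratedDeriv n (∏ i ∈ s, f i) x / n.factorial =
      ∑ α ∈ s.piAntidiag n, ∏ i ∈ s, iteratedDeriv (α i) (f i) x / (α i).factorial := by
  induction s using Finset.cons_induction generalizing n with
  | empty => rcases n with - | n <;> simp [Pi.one_def, iteratedDeriv_const]
  | cons a s has ih =>
    have hs (i) (hi : i ∈ s) := hf i (Finset.mem_cons_of_mem hi)
    rw [Finset.prod_cons, iteratedDeriv_mul_div_factorial (hf a (Finset.mem_cons_self a s))
      (contDiffAt_prod' hs), Finset.piAntidiag_cons, Finset.sum_disjiUnion]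
    refine Finset.sum_congr rfl fun q hq ↦ ?_
    have hqn : q.2 ≤ n := (Finset.HasAntidiagonal.mem_antidiagonal.mp hq) ▸ Nat.le_add_left _ _
    rw [ih fun i hi ↦ (hs i hi).of_le (mod_cast hqn), Finset.mul_sum, Finset.sum_map]
    refine Finset.sum_congr rfl fun α hα ↦ ?_
    have hαa : α a = 0 := not_imp_comm.mp ((Finset.mem_piAntidiag.mp hα).2 a) has
    rw [Finset.prod_cons]
    congr 1
    · simp [hαa]
    · refine Finset.prod_congr rfl fun i hi ↦ ?_
      simp [ne_of_mem_of_not_mem hi has]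

theorem hasFPowerSeriesOnBall_J0twoISqrt :
    HasFPowerSeriesOnBall J0twoISqrt
      (FormalMultilinearSeries.ofScalars ℂ fun n ↦ ((n.factorial : ℂ) ^ 2)⁻¹) 0 ⊤ := by
  set c : ℕ → ℂ := fun n ↦ ((n.factorial : ℂ) ^ 2)⁻¹ with hc
  have hratio (n : ℕ) : ‖c n.succ‖ / ‖c n‖ = (1 / ((n : ℝ) + 1)) ^ 2 := by
    have hn : (n.factorial : ℝ) ≠ 0 := mod_cast n.factorial_ne_zero
    simp only [hc, norm_inv, norm_pow, Complex.norm_natCast, Nat.factorial_succ]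
    push_cast
    field_simp
  have hradius : (FormalMultilinearSeries.ofScalars ℂ c).radius = ⊤ := by
    refine FormalMultilinearSeries.ofScalars_radius_eq_top_of_tendsto ℂ c
      (Eventually.of_forall fun n ↦ by simp [hc, Nat.factorial_ne_zero]) ?_
    simp only [hratio]
    simpa using (tendsto_one_div_add_atTop_nhds_zero_nat (𝕜 := ℝ)).pow 2
  have hsum : (FormalMultilinearSeries.ofScalars ℂ c).sum = J0twoISqrt := by
    funext z
    refine (FormalMultilinearSeries.ofScalars_sum_eq c z).trans (tsum_congr fun n ↦ ?_)
    rw [smul_eq_mul, mul_comm, div_eq_mul_inv]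
  simpa only [hsum, hradius] using
    (FormalMultilinearSeries.ofScalars ℂ c).hasFPowerSeriesOnBall (by simp [hradius])

theorem contDiff_J0twoISqrt {n : WithTop ℕ∞} : ContDiff ℂ n J0twoISqrt :=
  contDiff_iff_contDiffAt.mpr fun z ↦
    (hasFPowerSeriesOnBall_J0twoISqrt.analyticAt_of_mem (by simp)).contDiffAt

theorem iteratedDeriv_J0twoISqrt_zero (n : ℕ) :
    iteratedDeriv n J0twoISqrt 0 = (n.factorial : ℂ)⁻¹ := by
  have hn : (n.factorial : ℂ) ≠ 0 := mod_cast n.factorial_ne_zero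
  rw [iteratedDeriv_eq_iteratedFDeriv, ← hasFPowerSeriesOnBall_J0twoISqrt.factorial_smul,
    FormalMultilinearSeries.ofScalars_apply_eq]
  simp only [smul_eq_mul, one_pow, mul_one, nsmul_eq_mul]
  field_simp

theorem iteratedDeriv_J0twoISqrt_div_zero (p : ℂ) (n : ℕ) :
    iteratedDeriv n (fun z ↦ J0twoISqrt (z / p)) 0 = (p ^ n)⁻¹ / n.factorial := by
  simp only [div_eq_inv_mul _ p]
  rw [iteratedDeriv_comp_const_mul contDiff_J0twoISqrt]
  dsimp only
  rw [mul_zero, iteratedDeriv_J0twoISqrt_zero, inv_pow, div_eq_mul_inv]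

theorem prime_of_mem_primesLe {y : ℝ} {p : ℕ} (hp : p ∈ primesLe y) : p.Prime :=
  (Finset.mem_filter.mp hp).2

theorem factorial_mul_iteratedDeriv_Gfun_zero (y : ℝ) (k : ℕ) :
    k.factorial * iteratedDeriv k (Gfun y) 0 = diagonalSum (primesLe y) k := by
  have hcd (p) (_ : p ∈ primesLe y) : ContDiffAt ℂ k (fun z ↦ J0twoISqrt (z / p)) 0 :=
    (contDiff_J0twoISqrt.comp (contDiff_id.div_const _)).contDiffAt
  have hG : Gfun y = ∏ p ∈ primesLe y, fun z ↦ J0twoISqrt (z / p) := by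
    ext z
    rw [Gfun, Finset.prod_apply]
  have hk : (k.factorial : ℂ) ≠ 0 := mod_cast k.factorial_ne_zero
  have hderiv := iteratedDeriv_prod_div_factorial hcd
  rw [← hG, div_eq_iff hk] at hderiv
  simp only [diagonalSum, primeOrderings]
  rw [hderiv, sum_primeProducts (fun p ↦ prime_of_mem_primesLe) k
    fun α m ↦ (Nat.multinomial (primesLe y) α : ℝ) ^ 2 / m, mul_left_comm, ← sq, Finset.sum_mul]
  push_cast
  refine Finset.sum_congr rfl fun α hα ↦ ?_
  rw [← (Finset.mem_piAntidiag.mp hα).1, ← Nat.multinomial_spec]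
  have hα0 : (∏ p ∈ primesLe y, ((α p).factorial : ℂ)) ≠ 0 :=
    Finset.prod_ne_zero_iff.mpr fun p _ ↦ mod_cast (α p).factorial_ne_zero
  simp only [iteratedDeriv_J0twoISqrt_div_zero, div_div, Finset.prod_div_distrib,
    Finset.prod_mul_distrib, Finset.prod_inv_distrib]
  push_cast
  field_simp

end GeneratingFunction

section Moments

theorem ofReal_Vy (y t : ℝ) :
    (Vy y t : ℂ) =
      (dirichletPoly (primesLe y) 1 t - dirichletPoly (primesLe y) 1 (-t)) / (2 * I) := by
  simp only [dirichletPoly, Pi.one_apply, one_mul]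
  rw [Vy, ofReal_sum, ← Finset.sum_sub_distrib, Finset.sum_div]
  refine Finset.sum_congr rfl fun p hp ↦ ?_
  have hp0 := (prime_of_mem_primesLe hp).ne_zero
  rw [halfTwist_apply hp0, halfTwist_apply hp0]
  push_cast
  rw [Complex.sin]
  field_simp
  rw [I_sq]
  ring_nf

theorem ofReal_integral_Vy_pow (y a b : ℝ) (n : ℕ) :
    ((∫ t in a..b, Vy y t ^ n : ℝ) : ℂ) = ((2 * I) ^ n)⁻¹ *
      ∑ q ∈ Finset.HasAntidiagonal.antidiagonal n, n.choose q.1 * (-1) ^ q.2 *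
        ∫ t in a..b, dirichletPoly (primesLe y) 1 t ^ q.1 *
          dirichletPoly (primesLe y) 1 (-t) ^ q.2 := by
  have hcont : Continuous (dirichletPoly (primesLe y) 1) :=
    continuous_dirichletPoly (fun p hp ↦ (prime_of_mem_primesLe hp).ne_zero) 1
  have hpow (t : ℝ) : ((Vy y t ^ n : ℝ) : ℂ) = ((2 * I) ^ n)⁻¹ *
      ∑ q ∈ Finset.HasAntidiagonal.antidiagonal n, n.choose q.1 * (-1) ^ q.2 *
        (dirichletPoly (primesLe y) 1 t ^ q.1 * dirichletPoly (primesLe y) 1 (-t) ^ q.2) := by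
    rw [ofReal_pow, ofReal_Vy, sub_eq_add_neg, div_pow, (Commute.all _ _).add_pow', div_eq_inv_mul]
    congr 1
    refine Finset.sum_congr rfl fun q _ ↦ ?_
    rw [neg_pow, nsmul_eq_mul]
    ring
  rw [← intervalIntegral.integral_ofReal]
  simp only [hpow]
  rw [intervalIntegral.integral_const_mul, intervalIntegral.integral_finsetSum fun q _ ↦
    Continuous.intervalIntegrable (by fun_prop) _ _]
  simp only [intervalIntegral.integral_const_mul]

theorem deltan_two_mul (y : ℝ) (k : ℕ) :
    deltan y (2 * k) = k.centralBinom * diagonalSum (primesLe y) k / 4 ^ k := by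
  have hk : (k.factorial : ℂ) ≠ 0 := mod_cast k.factorial_ne_zero
  have hk' : (k.factorial : ℝ) ≠ 0 := mod_cast k.factorial_ne_zero
  have hderiv : iteratedDeriv k (Gfun y) 0 = (diagonalSum (primesLe y) k / k.factorial : ℝ) := by
    rw [ofReal_div, ofReal_natCast, ← factorial_mul_iteratedDeriv_Gfun_zero,
      mul_div_cancel_left₀ _ hk]
  rw [deltan, if_pos (even_two_mul k), Nat.mul_div_cancel_left k two_pos, hderiv, ofReal_re,
    Nat.centralBinom, Nat.cast_choose ℝ (Nat.le_mul_of_pos_left k two_pos), pow_mul,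
    show 2 * k - k = k by lia]
  norm_num
  field_simp

theorem ofReal_deltan (y : ℝ) (n : ℕ) :
    (deltan y n : ℂ) = ((2 * I) ^ n)⁻¹ *
      ∑ q ∈ Finset.HasAntidiagonal.antidiagonal n, n.choose q.1 * (-1) ^ q.2 *
        if q.1 = q.2 then (diagonalSum (primesLe y) q.2 : ℂ) else 0 := by
  rcases n.even_or_odd' with ⟨k, rfl | rfl⟩
  · rw [Finset.sum_eq_single (k, k), if_pos rfl, deltan_two_mul, Nat.centralBinom]
    · have hI : (2 * I) ^ (2 * k) = 4 ^ k * (-1) ^ k := by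
        rw [pow_mul, ← mul_pow, mul_pow, I_sq]
        norm_num
      rw [hI]
      push_cast
      field_simp
    · rintro ⟨i, j⟩ hij hne
      rw [Finset.HasAntidiagonal.mem_antidiagonal] at hij
      dsimp only at hij ⊢
      rw [if_neg (fun hdiag ↦ hne (by ext <;> dsimp only <;> lia)), mul_zero]
    · exact fun h ↦ (h (Finset.HasAntidiagonal.mem_antidiagonal.mpr (two_mul k).symm)).elim
  · rw [deltan, if_neg (Nat.not_even_two_mul_add_one k), Finset.sum_eq_zero, mul_zero, ofReal_zero]
    rintro ⟨i, j⟩ hij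
    rw [Finset.HasAntidiagonal.mem_antidiagonal] at hij
    dsimp only at hij ⊢
    rw [if_neg (by lia), mul_zero]

theorem le_floor_of_mem_primesLe {y : ℝ} {p : ℕ} (hp : p ∈ primesLe y) : p ≤ ⌊y⌋₊ :=
  Finset.mem_range_succ_iff.mp (Finset.mem_filter.mp hp).1

theorem abs_integral_Vy_pow_sub_le {y : ℝ} (hy : 1 ≤ y) (n : ℕ) (a b : ℝ) :
    |(∫ t in a..b, Vy y t ^ n) - (b - a) * deltan y n| ≤
      4 * (1 + n * Real.log ⌊y⌋₊) * √(n.factorial * (primesLe y).card ^ n) +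
        2 * (∑ p ∈ primesLe y, (√p)⁻¹) ^ n := by
  set B := 4 * (1 + n * Real.log ⌊y⌋₊) * √(n.factorial * (primesLe y).card ^ n) +
    2 * (∑ p ∈ primesLe y, (√p)⁻¹) ^ n with hB
  have hexpand : (((∫ t in a..b, Vy y t ^ n) - (b - a) * deltan y n : ℝ) : ℂ) =
      ((2 * I) ^ n)⁻¹ * ∑ q ∈ Finset.HasAntidiagonal.antidiagonal n, n.choose q.1 * (-1) ^ q.2 *
        ((∫ t in a..b, dirichletPoly (primesLe y) 1 t ^ q.1 *
            dirichletPoly (primesLe y) 1 (-t) ^ q.2) -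
          (b - a) * if q.1 = q.2 then (diagonalSum (primesLe y) q.2 : ℂ) else 0) := by
    push_cast
    rw [ofReal_integral_Vy_pow, ofReal_deltan, mul_left_comm, ← mul_sub, Finset.mul_sum,
      ← Finset.sum_sub_distrib]
    simp only [mul_sub, mul_left_comm]
  rw [← Real.norm_eq_abs, ← Complex.norm_real, hexpand, norm_mul, norm_inv, norm_pow, norm_mul,
    norm_I, mul_one, Complex.norm_ofNat, inv_mul_le_iff₀ (by positivity)]
  calc _ ≤ ∑ q ∈ Finset.HasAntidiagonal.antidiagonal n, n.choose q.1 * B := by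
        refine norm_sum_le_of_le _ fun q hq ↦ ?_
        rw [norm_mul, norm_mul, norm_pow, norm_neg, norm_one, one_pow, mul_one,
          Complex.norm_natCast]
        gcongr
        have hmean := norm_integral_dirichletPoly_one_pow_mul_sub_le
          (fun p ↦ prime_of_mem_primesLe) ((Nat.one_le_floor_iff y).mpr hy)
          (fun p ↦ le_floor_of_mem_primesLe) q.1 q.2 a b
        rwa [Finset.HasAntidiagonal.mem_antidiagonal.mp hq, ← hB] at hmean
    _ = 2 ^ n * B := by
        rw [← Finset.sum_mul, Finset.Nat.sum_antidiagonal_eq_sum_range_succ_mk]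
        norm_cast
        rw [Nat.sum_range_choose]

end Moments

section Estimates

theorem sum_Icc_inv_sqrt_le (N : ℕ) : ∑ m ∈ Finset.Icc 1 N, (√(m : ℝ))⁻¹ ≤ 2 * √N := by
  induction N with
  | zero => simp
  | succ N ih =>
    rw [Finset.sum_Icc_succ_top (by lia)]
    refine (add_le_add_left ih _).trans ?_
    have hsq : √((N + 1 : ℕ) : ℝ) ^ 2 = √(N : ℝ) ^ 2 + 1 := by
      rw [Real.sq_sqrt (by positivity), Real.sq_sqrt (by positivity)]
      push_cast
      ring
    have hdiff : 2 * √((N + 1 : ℕ) : ℝ) - (2 * √(N : ℝ) + (√((N + 1 : ℕ) : ℝ))⁻¹) =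
        (√((N + 1 : ℕ) : ℝ) - √(N : ℝ)) ^ 2 * (√((N + 1 : ℕ) : ℝ))⁻¹ := by
      field_simp
      linear_combination hsq
    rw [← sub_nonneg, hdiff]
    positivity

theorem primesLe_subset_Icc (y : ℝ) : primesLe y ⊆ Finset.Icc 1 ⌊y⌋₊ := fun _ hp ↦
  Finset.mem_Icc.mpr ⟨(prime_of_mem_primesLe hp).one_le, le_floor_of_mem_primesLe hp⟩

theorem sum_primesLe_inv_sqrt_le {y : ℝ} (hy : 0 ≤ y) :
    ∑ p ∈ primesLe y, (√(p : ℝ))⁻¹ ≤ 2 * √y :=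
  calc ∑ p ∈ primesLe y, (√(p : ℝ))⁻¹ ≤ ∑ m ∈ Finset.Icc 1 ⌊y⌋₊, (√(m : ℝ))⁻¹ :=
        Finset.sum_le_sum_of_subset_of_nonneg (primesLe_subset_Icc y) fun _ _ _ ↦ by positivity
    _ ≤ 2 * √(⌊y⌋₊ : ℝ) := sum_Icc_inv_sqrt_le _
    _ ≤ 2 * √y := by gcongr; exact Nat.floor_le hy

theorem card_primesLe_le {y : ℝ} (hy : 0 ≤ y) : ((primesLe y).card : ℝ) ≤ y := by
  refine le_trans ?_ (Nat.floor_le hy)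
  simpa using Finset.card_le_card (primesLe_subset_Icc y)

theorem card_primesLe_mul_log_le {y : ℝ} (hy : 1 ≤ y) :
    (primesLe y).card * Real.log y ≤ 5 * y := by
  rcases hy.eq_or_lt with rfl | hy
  · norm_num
  have hlog : 0 < Real.log (√y) := Real.log_pos (Real.lt_sqrt_of_sq_lt (by simpa using hy))
  have hcheb := Chebyshev.pi_le_log4_mul_div hy
  rw [← Nat.primesLE_card_eq_primeCounting, div_add' _ _ _ hlog.ne', le_div_iff₀ hlog] at hcheb
  have hlog4 : Real.log 4 ≤ 3 / 2 := by
    rw [show (4 : ℝ) = 2 ^ 2 by norm_num, Real.log_pow]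
    linarith [Real.log_two_lt_d9]
  have hsqrt : √y * Real.log (√y) ≤ y :=
    calc √y * Real.log (√y) ≤ √y * √y := by gcongr; exact Real.log_le_self (Real.sqrt_nonneg y)
      _ = y := Real.mul_self_sqrt (by linarith)
  have hlog_sqrt : Real.log y = 2 * Real.log (√y) := by
    rw [Real.log_sqrt (by linarith)]
    ring
  calc (primesLe y).card * Real.log y = 2 * ((primesLe y).card * Real.log (√y)) := by
        rw [hlog_sqrt]
        ring
    _ ≤ 2 * (Real.log 4 * y + √y * Real.log (√y)) := by gcongr; exact hcheb
    _ ≤ 5 * y := by nlinarith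

theorem isBigO_sq_mul_factorial :
    (fun n : ℕ ↦ (n : ℝ) ^ 2 * n.factorial) =O[atTop] fun n : ℕ ↦ ((n : ℝ) / 2) ^ n := by
  have hfact : (fun n : ℕ ↦ (n.factorial : ℝ)) =O[atTop]
      fun n : ℕ ↦ (n : ℝ) * (n / Real.exp 1) ^ n := by
    refine Stirling.factorial_isEquivalent_stirling.isBigO.trans
      (Asymptotics.IsBigO.of_bound (2 * π) ?_)
    filter_upwards [eventually_ge_atTop 1] with n hn
    have hn' : (1 : ℝ) ≤ n := mod_cast hn
    have hsqrt : √(2 * n * π) ≤ 2 * n * π :=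
      Real.sqrt_le_self_iff.mpr (Or.inr (by nlinarith [Real.pi_gt_three]))
    rw [Real.norm_of_nonneg (by positivity), Real.norm_of_nonneg (by positivity)]
    calc √(2 * n * π) * (n / Real.exp 1) ^ n ≤ 2 * n * π * (n / Real.exp 1) ^ n := by gcongr
      _ = 2 * π * (n * (n / Real.exp 1) ^ n) := by ring
  have hratio : 2 / Real.exp 1 < 1 := by
    rw [div_lt_one (Real.exp_pos 1)]
    linarith [Real.exp_one_gt_d9]
  have hgeom : (fun n : ℕ ↦ (n : ℝ) ^ 3 * (2 / Real.exp 1) ^ n) =O[atTop] fun _ ↦ (1 : ℝ) :=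
    (tendsto_pow_const_mul_const_pow_of_lt_one 3 (by positivity) hratio).isBigO_one ℝ
  refine (((Asymptotics.isBigO_refl (fun n : ℕ ↦ (n : ℝ) ^ 2) atTop).mul hfact).congr_right
    fun n ↦ ?_).trans ((hgeom.mul (Asymptotics.isBigO_refl (fun n : ℕ ↦ ((n : ℝ) / 2) ^ n)
      atTop)).congr_right fun n ↦ one_mul _)
  rw [div_pow, div_pow, div_pow]
  field_simp

theorem exists_sq_mul_factorial_le :
    ∃ K : ℝ, ∀ n : ℕ, (n : ℝ) ^ 2 * n.factorial ≤ K * (n / 2) ^ n := by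
  have hne (n : ℕ) : ((n : ℝ) / 2) ^ n ≠ 0 := by
    rcases n.eq_zero_or_pos with rfl | hn <;> positivity
  obtain ⟨K, hK⟩ := (Asymptotics.isBigO_nat_atTop_iff fun n hn ↦ (hne n hn).elim).mp
    isBigO_sq_mul_factorial
  refine ⟨K, fun n ↦ ?_⟩
  have hKn := hK n
  rwa [Real.norm_of_nonneg (by positivity), Real.norm_of_nonneg (by positivity)] at hKn

theorem one_add_mul_log_mul_sqrt_factorial_mul_card_pow_le {K y : ℝ} (hy : 1 ≤ y) {n : ℕ}
    (hn : 2 ≤ n) (hK : (n : ℝ) ^ 2 * n.factorial ≤ K * (n / 2) ^ n) :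
    (1 + n * Real.log ⌊y⌋₊) * √(n.factorial * (primesLe y).card ^ n) ≤
      6 * √K * √(n * y / 2) ^ n := by
  obtain ⟨m, rfl⟩ := Nat.exists_eq_add_of_le hn
  set n := 2 + m
  set c := ((primesLe y).card : ℝ)
  have hn1 : (1 : ℝ) ≤ n := mod_cast (by lia : 1 ≤ n)
  have hK0 : 0 ≤ K := nonneg_of_mul_nonneg_left (le_trans (by positivity) hK)
    (by positivity : 0 < ((n : ℝ) / 2) ^ n)
  have hlog : Real.log ⌊y⌋₊ ≤ Real.log y :=
    Real.log_le_log (mod_cast Nat.floor_pos.mpr hy) (Nat.floor_le (by linarith))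
  have hlog0 : 0 ≤ Real.log y := Real.log_nonneg hy
  have hc : c * (1 + Real.log y) ≤ 6 * y := by
    linarith [card_primesLe_mul_log_le hy, card_primesLe_le (zero_le_one.trans hy)]
  have hsq : (n * (1 + Real.log y)) ^ 2 * (n.factorial * c ^ n) ≤
      (6 * √K * √(n * y / 2) ^ n) ^ 2 :=
    calc (n * (1 + Real.log y)) ^ 2 * (n.factorial * c ^ n)
        = (n ^ 2 * n.factorial) * ((c * (1 + Real.log y)) ^ 2 * c ^ m) := by ring
      _ ≤ (K * (n / 2) ^ n) * ((6 * y) ^ 2 * y ^ m) := by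
          gcongr
          exact card_primesLe_le (by linarith)
      _ = (6 * √K * √(n * y / 2) ^ n) ^ 2 := by
          rw [mul_pow (6 * √K), mul_pow 6 √K, Real.sq_sqrt hK0, pow_right_comm,
            Real.sq_sqrt (by positivity), mul_div_right_comm, mul_pow (_ / _) y, pow_add y]
          ring
  calc (1 + n * Real.log ⌊y⌋₊) * √(n.factorial * c ^ n)
      ≤ n * (1 + Real.log y) * √(n.factorial * c ^ n) := by
        gcongr
        nlinarith
    _ = √((n * (1 + Real.log y)) ^ 2 * (n.factorial * c ^ n)) := by
        rw [Real.sqrt_mul (sq_nonneg _), Real.sqrt_sq (by positivity)]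
    _ ≤ 6 * √K * √(n * y / 2) ^ n := Real.sqrt_le_iff.mpr ⟨by positivity, hsq⟩

theorem two_mul_sqrt_pow_le {y : ℝ} (hy : 0 ≤ y) (n : ℕ) :
    (2 * √y) ^ n ≤ Real.exp 4 * √(n * y / 2) ^ n := by
  have hexp : (8 : ℝ) ^ n ≤ Real.exp 8 * n ^ n :=
    calc (8 : ℝ) ^ n ≤ Real.exp 8 * n.factorial :=
          (div_le_iff₀ (by positivity)).mp (Real.pow_div_factorial_le_exp 8 (by norm_num) n)
      _ ≤ Real.exp 8 * n ^ n := by gcongr; exact_mod_cast n.factorial_le_pow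
  refine le_of_sq_le_sq ?_ (by positivity)
  calc ((2 * √y) ^ n) ^ 2 = 8 ^ n * (y / 2) ^ n := by
        rw [pow_right_comm, mul_pow, Real.sq_sqrt hy, ← mul_pow]
        ring
    _ ≤ Real.exp 8 * n ^ n * (y / 2) ^ n := by gcongr
    _ = (Real.exp 4 * √(n * y / 2) ^ n) ^ 2 := by
        rw [mul_pow (Real.exp 4), pow_right_comm, Real.sq_sqrt (by positivity),
          ← Real.exp_nat_mul, mul_assoc, ← mul_pow, mul_div_assoc]
        norm_num

theorem abs_integral_sin_mul_le {c : ℝ} (hc : 0 < c) (a b : ℝ) :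
    |∫ t in a..b, Real.sin (t * c)| ≤ 2 / c := by
  rw [intervalIntegral.integral_comp_mul_right Real.sin hc.ne', integral_sin, smul_eq_mul, abs_mul,
    abs_inv, abs_of_pos hc, inv_mul_eq_div]
  gcongr
  exact (abs_sub _ _).trans (by linarith [Real.abs_cos_le_one (a * c), Real.abs_cos_le_one (b * c)])

theorem abs_integral_Vy_le {y : ℝ} (hy : 0 ≤ y) (a b : ℝ) :
    |∫ t in a..b, Vy y t| ≤ 8 * √y := by
  unfold Vy
  rw [intervalIntegral.integral_finsetSum fun p _ ↦
    Continuous.intervalIntegrable (by fun_prop) _ _]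
  calc |∑ p ∈ primesLe y, ∫ t in a..b, Real.sin (t * Real.log p) / √p|
      ≤ ∑ p ∈ primesLe y, 4 * (√(p : ℝ))⁻¹ := by
        refine Finset.abs_sum_le_sum_abs _ _ |>.trans (Finset.sum_le_sum fun p hp ↦ ?_)
        have hlog : 1 / 2 ≤ Real.log p :=
          (by linarith [Real.log_two_gt_d9] : 1 / 2 ≤ Real.log 2).trans
            (Real.log_le_log two_pos (mod_cast (prime_of_mem_primesLe hp).two_le))
        rw [intervalIntegral.integral_div, abs_div, abs_of_nonneg (Real.sqrt_nonneg _),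
          div_eq_mul_inv]
        gcongr
        refine (abs_integral_sin_mul_le (by linarith) a b).trans ?_
        rw [div_le_iff₀ (by linarith)]
        linarith
    _ ≤ 8 * √y := by
        rw [← Finset.mul_sum]
        linarith [sum_primesLe_inv_sqrt_le hy]

end Estimates

theorem moments_of_Vy_general :
    ∃ C : ℝ, 0 < C ∧ ∀ y : ℝ, 1 ≤ y → ∀ n : ℕ, 1 ≤ n → ∀ a b : ℝ,
      |(∫ t in a..b, (Vy y t) ^ n) - (b - a) * deltan y n|
        ≤ C * ((n * y / 2 : ℝ) ^ ((n : ℝ) / 2)) := by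
  obtain ⟨K, hK⟩ := exists_sq_mul_factorial_le
  refine ⟨24 * √K + 4 * Real.exp 4, by positivity, fun y hy n hn a b ↦ ?_⟩
  have hy0 : 0 ≤ y := by linarith
  have htwo := two_mul_sqrt_pow_le hy0 n
  rw [Real.rpow_div_two_eq_sqrt _ (by positivity), Real.rpow_natCast]
  have hexp : 0 ≤ Real.exp 4 * √(n * y / 2) ^ n := by positivity
  rcases hn.eq_or_lt with rfl | hn
  · have hsqrtK : 0 ≤ √K * √((1 : ℕ) * y / 2) ^ 1 := by positivity
    have hlin := abs_integral_Vy_le hy0 a b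
    simp only [pow_one, deltan, Nat.not_even_one, if_false, mul_zero, sub_zero] at htwo hsqrtK ⊢
    linarith
  · have hlead := one_add_mul_log_mul_sqrt_factorial_mul_card_pow_le hy hn (hK n)
    have hprimes : (∑ p ∈ primesLe y, (√(p : ℝ))⁻¹) ^ n ≤ (2 * √y) ^ n := by
      gcongr
      exact sum_primesLe_inv_sqrt_le hy0
    linarith [abs_integral_Vy_pow_sub_le hy n a b]

/-- **Lemma 1** (Ivić–Korolev). For `n ≥ 1`, any real `T` and any `H > 1`,
`∫_T^{T+H} V_yⁿ(t) dt = H δ_n + O((ny/2)^{n/2})` with an absolute `O`-constant. -/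
theorem moments_of_Vy :
    ∃ C : ℝ, 0 < C ∧ ∀ y : ℝ, 2 < y → ∀ n : ℕ, 1 ≤ n → ∀ T H : ℝ, 1 < H →
      |(∫ t in T..(T + H), (Vy y t) ^ n) - H * deltan y n|
        ≤ C * ((n * y / 2 : ℝ) ^ ((n : ℝ) / 2)) := by
  obtain ⟨C, hC, hbound⟩ := moments_of_Vy_general
  refine ⟨C, hC, fun y hy n hn T H _ ↦ ?_⟩
  simpa only [add_sub_cancel_left] using hbound y (by linarith) n hn T (T + H)
end

section
/- For every real u and every ω > 0 one has |sgn(u) − F_ω(u)| ≤ K(ω·u); that is, sgn(u) = F_ω(u) + θ·K(ωu) with |θ| ≤ 1. -/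
open MeasureTheory Real Complex Filter

/-- The Fejér kernel `K(x) = (sin(πx)/(πx))²`, with `K(0) = 1`. -/
noncomputable def Kf (x : ℝ) : ℝ := if x = 0 then 1 else (Real.sin (π * x) / (π * x)) ^ 2

/-- The function `g(t) = 2(π⁻¹ sgn(t) + (1-|t|) cot(πt))` for `|t| < 1`, and `g(t) = 0`
for `|t| ≥ 1` (in particular `g(±1) = 0`). -/
noncomputable def gfun (t : ℝ) : ℝ :=
  if |t| < 1 then
    2 * (π⁻¹ * Real.sign t + (1 - |t|) * (Real.cos (π * t) / Real.sin (π * t)))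
  else 0

/-- `F_ω(u) = (1/ω) ∫_0^ω g(t/ω) sin(2πut) dt`. -/
noncomputable def Fom (ω u : ℝ) : ℝ :=
  (1 / ω) * ∫ t in (0 : ℝ)..ω, gfun (t / ω) * Real.sin (2 * π * u * t)

/-!
Rescaling reduces the claim to `ω = 1`. Since
`cot θ * (sin (α + 2θ) - sin α) = cos (α + 2θ) + cos α`, the cotangent disappears from the
difference `F₁(x + 1) - F₁(x)`, and the remaining elementary integrals give
`F₁(x + 1) = F₁(x) + K(x) / (x + 1)²`, while `(x + 1)² K(x + 1) = x² K(x)`. Hence for `x ≥ 0` the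
sequence `F₁(x + n)` increases and `F₁(x + n) + K(x + n)` decreases. Both tend to `1`: the
recurrence gives `F₁(n + 1) = 1`, the Riemann–Lebesgue lemma gives `F₁(x + n) - F₁(n) → 0`, and
`K(x + n) → 0`. So `F₁(x) ≤ 1 ≤ F₁(x) + K(x)`, and `F₁` is odd.
-/

lemma two_mul_abs_mul_one_sub_abs_le_abs_sin_pi_mul (t : ℝ) :
    2 * |t| * (1 - |t|) ≤ |Real.sin (π * t)| := by
  have jordan {s : ℝ} (hs₀ : 0 ≤ s) (hs : s ≤ 1 / 2) : 2 * s ≤ |Real.sin (π * s)| := by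
    have h := Real.mul_abs_le_abs_sin (x := π * s) <| by
      rw [abs_of_nonneg (by positivity)]
      nlinarith [Real.pi_pos]
    rwa [abs_of_nonneg (by positivity), ← mul_assoc, div_mul_cancel₀ _ Real.pi_ne_zero] at h
  have abs_sin_abs : |Real.sin (π * |t|)| = |Real.sin (π * t)| := by
    rcases abs_choice t with h | h <;> simp [h]
  have ht₀ := abs_nonneg t
  rw [← abs_sin_abs]
  rcases le_total |t| (1 / 2) with hhalf | hhalf
  · nlinarith [jordan ht₀ hhalf]
  rcases le_total |t| 1 with hone | hone
  · have reflect : Real.sin (π * (1 - |t|)) = Real.sin (π * |t|) := by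
      rw [mul_one_sub, Real.sin_pi_sub]
    nlinarith [reflect ▸ jordan (sub_nonneg.2 hone) (by linarith)]
  · have hneg : 2 * |t| * (1 - |t|) ≤ 0 :=
      mul_nonpos_of_nonneg_of_nonpos (by positivity) (sub_nonpos.2 hone)
    exact hneg.trans (abs_nonneg _)

lemma cot_mul_sin_add_two_mul_sub_sin {θ : ℝ} (hθ : Real.sin θ ≠ 0) (α : ℝ) :
    Real.cos θ / Real.sin θ * (Real.sin (α + 2 * θ) - Real.sin α) =
      Real.cos (α + 2 * θ) + Real.cos α := by
  rw [Real.sin_sub_sin, Real.cos_add_cos, show (α + 2 * θ - α) / 2 = θ by ring]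
  field_simp

lemma integral_sin_mul {c : ℝ} (hc : c ≠ 0) :
    ∫ t in (0 : ℝ)..1, Real.sin (c * t) = (1 - Real.cos c) / c := by
  rw [intervalIntegral.integral_comp_mul_left Real.sin hc, integral_sin, mul_zero, mul_one,
    Real.cos_zero, smul_eq_mul, inv_mul_eq_div]

lemma integral_one_sub_mul_cos_mul {c : ℝ} (hc : c ≠ 0) :
    ∫ t in (0 : ℝ)..1, (1 - t) * Real.cos (c * t) = (1 - Real.cos c) / c ^ 2 := by
  have antideriv (t : ℝ) : HasDerivAt
      (fun s ↦ (1 - s) * Real.sin (c * s) / c - Real.cos (c * s) / c ^ 2)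
      ((1 - t) * Real.cos (c * t)) t := by
    have hlin : HasDerivAt (fun s ↦ c * s) c t := by simpa using (hasDerivAt_id t).const_mul c
    have hsub : HasDerivAt (fun s : ℝ ↦ 1 - s) (-1) t := (hasDerivAt_id t).const_sub 1
    refine (((hsub.mul hlin.sin).div_const c).sub (hlin.cos.div_const (c ^ 2))).congr_deriv ?_
    field_simp
    ring
  rw [intervalIntegral.integral_eq_sub_of_hasDerivAt (fun t _ ↦ antideriv t)
    (Continuous.intervalIntegrable (by fun_prop) _ _)]
  simp only [mul_one, mul_zero, sub_self, zero_mul, zero_div, Real.sin_zero, Real.cos_zero]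
  ring

lemma tendsto_integral_mul_cos_cocompact {f : ℝ → ℝ} (hf : Integrable f) :
    Tendsto (fun w ↦ ∫ t, f t * Real.cos (2 * π * w * t)) (cocompact ℝ) (nhds 0) := by
  have re_integral (w : ℝ) : (∫ t, Real.fourierChar (-(t * w)) • (f t : ℂ)).re =
      ∫ t, f t * Real.cos (2 * π * w * t) := by
    have hint : Integrable fun t ↦ Real.fourierChar (-(t * w)) • (f t : ℂ) := by
      simpa [mul_comm] using (Real.fourierIntegral_convergent_iff w).2 hf.ofReal
    rw [← RCLike.re_eq_complex_re, ← integral_re hint]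
    refine integral_congr_ae (.of_forall fun t ↦ ?_)
    simp only [RCLike.re_eq_complex_re, Circle.smul_def, smul_eq_mul, Complex.re_mul_ofReal,
      Real.fourierChar_apply, Complex.exp_ofReal_mul_I_re]
    rw [← Real.cos_neg, mul_comm]
    ring_nf
  simpa only [Function.comp_def, re_integral, Complex.zero_re] using
    (Complex.continuous_re.tendsto 0).comp
      (Real.tendsto_integral_exp_smul_cocompact fun t ↦ (f t : ℂ))

lemma tendsto_intervalIntegral_mul_cos_cocompact {f : ℝ → ℝ} {a b : ℝ}
    (hf : IntervalIntegrable f volume a b) :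
    Tendsto (fun w ↦ ∫ t in a..b, f t * Real.cos (2 * π * w * t)) (cocompact ℝ) (nhds 0) := by
  have h := tendsto_integral_mul_cos_cocompact (hf.def'.integrable_indicator measurableSet_uIoc)
  have hset (w : ℝ) : (∫ t, (Set.uIoc a b).indicator f t * Real.cos (2 * π * w * t)) =
      ∫ t in Set.uIoc a b, f t * Real.cos (2 * π * w * t) := by
    rw [← integral_indicator measurableSet_uIoc]
    simp only [Set.indicator_mul_left]
  simp only [hset] at h
  simpa only [intervalIntegral.intervalIntegral_eq_integral_uIoc, smul_zero] using
    h.const_smul (if a ≤ b then 1 else -1 : ℝ)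

lemma Kf_zero : Kf 0 = 1 := if_pos rfl

lemma Kf_neg (x : ℝ) : Kf (-x) = Kf x := by simp [Kf]

lemma Kf_nonneg (x : ℝ) : 0 ≤ Kf x := by
  unfold Kf
  split_ifs <;> positivity

lemma sq_mul_Kf (x : ℝ) : (π * x) ^ 2 * Kf x = Real.sin (π * x) ^ 2 := by
  rcases eq_or_ne x 0 with rfl | hx
  · simp
  · rw [Kf, if_neg hx, ← mul_pow, mul_div_cancel₀ _ (mul_ne_zero Real.pi_ne_zero hx)]

lemma add_one_sq_mul_Kf_add_one (x : ℝ) : (x + 1) ^ 2 * Kf (x + 1) = x ^ 2 * Kf x := by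
  refine mul_left_cancel₀ (pow_ne_zero 2 Real.pi_ne_zero) ?_
  rw [← mul_assoc, ← mul_assoc, ← mul_pow, ← mul_pow, sq_mul_Kf, sq_mul_Kf, mul_add_one,
    Real.sin_add_pi, neg_sq]

lemma Kf_natCast_add_one (n : ℕ) : Kf (n + 1) = 0 := by
  have hn : π * ((n : ℝ) + 1) ≠ 0 := by positivity
  have hsin : Real.sin (π * ((n : ℝ) + 1)) = 0 := by
    rw [mul_comm, ← Nat.cast_add_one, Real.sin_nat_mul_pi]
  simpa [hn, hsin] using sq_mul_Kf (n + 1)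

lemma Kf_le_inv_sq {x : ℝ} (hx : x ≠ 0) : Kf x ≤ ((π * x) ^ 2)⁻¹ := by
  have hpos : 0 < (π * x) ^ 2 := by positivity
  rw [← one_div, le_div_iff₀' hpos, sq_mul_Kf]
  exact Real.sin_sq_le_one _

lemma tendsto_Kf_atTop : Tendsto Kf atTop (nhds 0) := by
  have hinv : Tendsto (fun x : ℝ ↦ ((π * x) ^ 2)⁻¹) atTop (nhds 0) :=
    tendsto_inv_atTop_zero.comp <|
      (tendsto_pow_atTop two_ne_zero).comp (tendsto_id.const_mul_atTop Real.pi_pos)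
  refine squeeze_zero' (.of_forall Kf_nonneg) ?_ hinv
  filter_upwards [eventually_ne_atTop 0] with x hx using Kf_le_inv_sq hx

lemma one_sub_cos_two_pi_mul (x : ℝ) : 1 - Real.cos (2 * π * x) = 2 * (π * x) ^ 2 * Kf x := by
  rw [mul_assoc 2 _ (Kf x), sq_mul_Kf, mul_assoc 2 π x, Real.cos_two_mul, Real.cos_sq']
  ring

lemma integral_sin_two_pi_mul (x : ℝ) :
    ∫ t in (0 : ℝ)..1, Real.sin (2 * π * x * t) = π * x * Kf x := by
  rcases eq_or_ne x 0 with rfl | hx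
  · simp
  · rw [integral_sin_mul (by positivity), one_sub_cos_two_pi_mul]
    field_simp

lemma integral_one_sub_mul_cos_two_pi_mul (x : ℝ) :
    ∫ t in (0 : ℝ)..1, (1 - t) * Real.cos (2 * π * x * t) = Kf x / 2 := by
  rcases eq_or_ne x 0 with rfl | hx
  · simp only [mul_zero, zero_mul, Real.cos_zero, mul_one, Kf_zero]
    rw [intervalIntegral.integral_comp_sub_left fun t ↦ t]
    norm_num
  · rw [integral_one_sub_mul_cos_mul (by positivity), one_sub_cos_two_pi_mul]
    field_simp

lemma measurable_real_sign : Measurable Real.sign :=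
  .ite measurableSet_Iio measurable_const (.ite measurableSet_Ioi measurable_const measurable_const)

lemma measurable_gfun : Measurable gfun := by
  have := measurable_real_sign
  exact .ite (measurableSet_lt (by fun_prop) (by fun_prop)) (by fun_prop) (by fun_prop)

lemma gfun_of_mem_Ioo {t : ℝ} (ht : t ∈ Set.Ioo 0 1) :
    gfun t = 2 * (π⁻¹ + (1 - t) * (Real.cos (π * t) / Real.sin (π * t))) := by
  rw [gfun, abs_of_pos ht.1, if_pos ht.2, Real.sign_of_pos ht.1, mul_one]

lemma abs_mul_gfun_le (t : ℝ) : |t * gfun t| ≤ 2 := by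
  unfold gfun
  split_ifs with ht
  · have hsign : |t * (π⁻¹ * Real.sign t)| ≤ 1 / 2 := by
      have hπ : π⁻¹ ≤ 1 / 2 := by
        rw [← one_div]
        exact one_div_le_one_div_of_le two_pos Real.two_le_pi
      have hs : |Real.sign t| ≤ 1 := by
        rcases Real.sign_apply_eq t with h | h | h <;> simp [h]
      rw [abs_mul, abs_mul, abs_of_pos (inv_pos.2 Real.pi_pos)]
      calc |t| * (π⁻¹ * |Real.sign t|) ≤ 1 * (1 / 2 * 1) := by gcongr
        _ = 1 / 2 := by norm_num
    have hcot : |t * ((1 - |t|) * (Real.cos (π * t) / Real.sin (π * t)))| ≤ 1 / 2 := by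
      rw [abs_mul, abs_mul, abs_div, abs_of_pos (sub_pos.2 ht), ← mul_assoc, ← mul_div_assoc]
      refine div_le_of_le_mul₀ (abs_nonneg _) (by norm_num) ?_
      calc |t| * (1 - |t|) * |Real.cos (π * t)| ≤ |t| * (1 - |t|) * 1 := by
            have := sub_pos.2 ht
            gcongr
            exact Real.abs_cos_le_one _
        _ ≤ 1 / 2 * |Real.sin (π * t)| := by
            linarith [two_mul_abs_mul_one_sub_abs_le_abs_sin_pi_mul t]
    rw [mul_left_comm, mul_add, abs_mul, abs_two]
    linarith [abs_add_le (t * (π⁻¹ * Real.sign t))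
      (t * ((1 - |t|) * (Real.cos (π * t) / Real.sin (π * t))))]
  · simp

lemma intervalIntegrable_gfun_mul_sin (c a b : ℝ) :
    IntervalIntegrable (fun t ↦ gfun t * Real.sin (c * t)) volume a b := by
  have bound (t : ℝ) : |gfun t * Real.sin (c * t)| ≤ 2 * |c| :=
    calc |gfun t * Real.sin (c * t)| ≤ |gfun t| * |c * t| := by
          rw [abs_mul]
          exact mul_le_mul_of_nonneg_left Real.abs_sin_le_abs (abs_nonneg _)
      _ = |t * gfun t| * |c| := by
          rw [abs_mul, abs_mul]
          ring
      _ ≤ 2 * |c| := by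
          gcongr
          exact abs_mul_gfun_le t
  refine (intervalIntegrable_const (c := 2 * |c|)).mono_fun' ?_ (.of_forall bound)
  exact (measurable_gfun.mul (by fun_prop)).aestronglyMeasurable

lemma gfun_mul_sin_sub_sin {t : ℝ} (ht : t ∈ Set.Ioo 0 1) (x : ℝ) :
    gfun t * Real.sin (2 * π * (x + 1) * t) - gfun t * Real.sin (2 * π * x * t) =
      2 * π⁻¹ * (Real.sin (2 * π * (x + 1) * t) - Real.sin (2 * π * x * t)) +
        2 * ((1 - t) * Real.cos (2 * π * (x + 1) * t) +
          (1 - t) * Real.cos (2 * π * x * t)) := by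
  have hsin : 0 < Real.sin (π * t) :=
    Real.sin_pos_of_pos_of_lt_pi (mul_pos Real.pi_pos ht.1) (by nlinarith [Real.pi_pos, ht.2])
  have hcot := cot_mul_sin_add_two_mul_sub_sin hsin.ne' (2 * π * x * t)
  rw [show 2 * π * x * t + 2 * (π * t) = 2 * π * (x + 1) * t by ring] at hcot
  rw [gfun_of_mem_Ioo ht]
  linear_combination 2 * (1 - t) * hcot

lemma Fom_one (x : ℝ) : Fom 1 x = ∫ t in (0 : ℝ)..1, gfun t * Real.sin (2 * π * x * t) := by
  simp [Fom]

lemma Fom_eq_Fom_one_mul {ω : ℝ} (hω : ω ≠ 0) (u : ℝ) : Fom ω u = Fom 1 (ω * u) := by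
  have rescale := intervalIntegral.integral_comp_div (a := 0) (b := ω)
    (fun t ↦ gfun t * Real.sin (2 * π * (ω * u) * t)) hω
  rw [zero_div, div_self hω, smul_eq_mul, ← Fom_one] at rescale
  rw [Fom, one_div, inv_mul_eq_iff_eq_mul₀ hω, ← rescale]
  refine intervalIntegral.integral_congr fun t _ ↦ ?_
  congr 2
  field_simp

lemma Fom_neg (ω u : ℝ) : Fom ω (-u) = -Fom ω u := by
  simp [Fom]

lemma Fom_one_add_one_sub (x : ℝ) : Fom 1 (x + 1) - Fom 1 x =
    2 * ((x + 1) * Kf (x + 1) - x * Kf x) + (Kf (x + 1) + Kf x) := by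
  have hsin (y : ℝ) : IntervalIntegrable (fun t ↦ Real.sin (2 * π * y * t)) volume 0 1 :=
    Continuous.intervalIntegrable (by fun_prop) _ _
  have hcos (y : ℝ) : IntervalIntegrable (fun t ↦ (1 - t) * Real.cos (2 * π * y * t)) volume 0 1 :=
    Continuous.intervalIntegrable (by fun_prop) _ _
  rw [Fom_one, Fom_one,
    ← intervalIntegral.integral_sub (intervalIntegrable_gfun_mul_sin _ _ _)
      (intervalIntegrable_gfun_mul_sin _ _ _),
    intervalIntegral.integral_congr_Ioo_of_le zero_le_one fun t ht ↦ gfun_mul_sin_sub_sin ht x,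
    intervalIntegral.integral_add (((hsin _).sub (hsin _)).const_mul _)
      (((hcos _).add (hcos _)).const_mul _),
    intervalIntegral.integral_const_mul, intervalIntegral.integral_const_mul,
    intervalIntegral.integral_sub (hsin _) (hsin _),
    intervalIntegral.integral_add (hcos _) (hcos _), integral_sin_two_pi_mul,
    integral_sin_two_pi_mul, integral_one_sub_mul_cos_two_pi_mul,
    integral_one_sub_mul_cos_two_pi_mul]
  field_simp

lemma Fom_one_add_one {x : ℝ} (hx : x + 1 ≠ 0) :
    Fom 1 (x + 1) = Fom 1 x + Kf x / (x + 1) ^ 2 := by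
  have hK : Kf (x + 1) = x ^ 2 * Kf x / (x + 1) ^ 2 := by
    rw [eq_div_iff (pow_ne_zero 2 hx), mul_comm, add_one_sq_mul_Kf_add_one]
  rw [← sub_eq_iff_eq_add', Fom_one_add_one_sub, hK]
  field_simp
  ring

lemma Fom_one_natCast_add_one (n : ℕ) : Fom 1 (n + 1) = 1 := by
  induction n with
  | zero => simpa [Kf_zero, Fom] using Fom_one_add_one (x := 0) (by norm_num)
  | succ n ih =>
    rw [Nat.cast_add_one, Fom_one_add_one (by positivity), ih, Kf_natCast_add_one, zero_div,
      add_zero]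

lemma Fom_one_le_Fom_one_add_one {x : ℝ} (hx : x + 1 ≠ 0) : Fom 1 x ≤ Fom 1 (x + 1) := by
  rw [Fom_one_add_one hx]
  exact le_add_of_nonneg_right (div_nonneg (Kf_nonneg x) (sq_nonneg _))

lemma Fom_one_add_Kf_add_one_le {x : ℝ} (hx : 0 ≤ x) :
    Fom 1 (x + 1) + Kf (x + 1) ≤ Fom 1 x + Kf x := by
  have hpos : 0 < (x + 1) ^ 2 := by positivity
  have hdecr : Kf x / (x + 1) ^ 2 + Kf (x + 1) ≤ Kf x := by
    rw [div_add' _ _ _ hpos.ne', div_le_iff₀ hpos, mul_comm (Kf (x + 1)),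
      add_one_sq_mul_Kf_add_one]
    nlinarith [mul_nonneg hx (Kf_nonneg x)]
  rw [Fom_one_add_one (by positivity)]
  linarith

lemma tendsto_Fom_one_add_sub_Fom_one (x : ℝ) :
    Tendsto (fun y ↦ Fom 1 (x + y) - Fom 1 y) atTop (nhds 0) := by
  have hdiff (y : ℝ) : Fom 1 (x + y) - Fom 1 y =
      2 * ∫ t in (0 : ℝ)..1,
        gfun t * Real.sin (π * x * t) * Real.cos (2 * π * (x / 2 + y) * t) := by
    rw [Fom_one, Fom_one, ← intervalIntegral.integral_sub (intervalIntegrable_gfun_mul_sin _ _ _)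
      (intervalIntegrable_gfun_mul_sin _ _ _), ← intervalIntegral.integral_const_mul]
    refine intervalIntegral.integral_congr fun t _ ↦ ?_
    rw [← mul_sub, Real.sin_sub_sin]
    ring_nf
  have hshift : Tendsto (fun y : ℝ ↦ x / 2 + y) atTop (cocompact ℝ) :=
    (tendsto_atTop_add_const_left _ _ tendsto_id).mono_right atTop_le_cocompact
  simpa only [hdiff, mul_zero, Function.comp_def] using
    ((tendsto_intervalIntegral_mul_cos_cocompact
      (intervalIntegrable_gfun_mul_sin (π * x) 0 1)).comp hshift).const_mul 2

lemma tendsto_Fom_one_add_natCast (x : ℝ) :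
    Tendsto (fun n : ℕ ↦ Fom 1 (x + n)) atTop (nhds 1) := by
  rw [← tendsto_add_atTop_iff_nat 1]
  have hcast : Tendsto (fun n : ℕ ↦ (n : ℝ) + 1) atTop atTop :=
    tendsto_atTop_add_const_right _ _ tendsto_natCast_atTop_atTop
  simpa [Function.comp_def, Fom_one_natCast_add_one] using
    ((tendsto_Fom_one_add_sub_Fom_one x).comp hcast).add_const 1

lemma Fom_one_le_one {x : ℝ} (hx : 0 ≤ x) : Fom 1 x ≤ 1 := by
  have hmono : Monotone fun n : ℕ ↦ Fom 1 (x + n) := monotone_nat_of_le_succ fun n ↦ by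
    rw [Nat.cast_add_one, ← add_assoc]
    exact Fom_one_le_Fom_one_add_one (by positivity)
  simpa using hmono.ge_of_tendsto (tendsto_Fom_one_add_natCast x) 0

lemma one_le_Fom_one_add_Kf {x : ℝ} (hx : 0 ≤ x) : 1 ≤ Fom 1 x + Kf x := by
  have hanti : Antitone fun n : ℕ ↦ Fom 1 (x + n) + Kf (x + n) :=
    antitone_nat_of_succ_le fun n ↦ by
      rw [Nat.cast_add_one, ← add_assoc]
      exact Fom_one_add_Kf_add_one_le (by positivity)
  have hKf : Tendsto (fun n : ℕ ↦ Kf (x + n)) atTop (nhds 0) :=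
    tendsto_Kf_atTop.comp (tendsto_atTop_add_const_left _ _ tendsto_natCast_atTop_atTop)
  simpa using hanti.le_of_tendsto ((tendsto_Fom_one_add_natCast x).add hKf) 0

lemma abs_one_sub_Fom_one_le_Kf {x : ℝ} (hx : 0 ≤ x) : |1 - Fom 1 x| ≤ Kf x := by
  rw [abs_of_nonneg (sub_nonneg.2 (Fom_one_le_one hx)), sub_le_iff_le_add']
  exact one_le_Fom_one_add_Kf hx

/-- **Lemma 11** (Ivić–Korolev, after Tsang/Selberg). For every real `u` and `ω > 0`,
`sgn(u) = F_ω(u) + θK(ωu)` with `|θ| ≤ 1`. -/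
theorem sgn_approx_by_Fom :
    ∀ u ω : ℝ, 0 < ω → |Real.sign u - Fom ω u| ≤ Kf (ω * u) := by
  intro u ω hω
  rw [Fom_eq_Fom_one_mul hω.ne']
  rcases lt_trichotomy u 0 with hu | rfl | hu
  · have h := abs_one_sub_Fom_one_le_Kf (x := -(ω * u)) (by nlinarith)
    rwa [Fom_neg, Kf_neg, ← abs_neg, neg_sub', neg_neg, ← Real.sign_of_neg hu] at h
  · simp [Fom, Kf_zero]
  · rw [Real.sign_of_pos hu]
    exact abs_one_sub_Fom_one_le_Kf (by positivity)
end
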